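/- For every δ > 0 there exists κ > 0 such that lim_{L→∞} P_{unif,L}( T_1(π) + ⋯ + T_{m_L}(π) ≥ κ (log L)² ) = 0, where m_L = min(γ_L(π), ⌊δ log L⌋). In words: with probability tending to 1, the total length of the first δ log L excursions of the uniform prudent walk is at most κ (log L)². -/

import Mathlib

open Filter Set

/-- One admissible step of a nearest-neighbour walk on `ℤ²`. -/
def IsStep (s : ℤ × ℤ) : Prop :=
  s = (1, 0) ∨ s = (-1, 0) ∨ s = (0, 1) ∨ s = (0, -1)

/-- The set `Ω_L` of prudent paths of length `L`. -/
def prudentSet (L : ℕ) : Set (Fin (L + 1) → ℤ × ℤ) :=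
  {π | π 0 = (0, 0) ∧ ∀ i : Fin L,
    IsStep (π i.succ - π i.castSucc) ∧
    ∀ k : ℕ, 1 ≤ k → ∀ j : Fin (L + 1), j ≤ i.castSucc →
      π i.castSucc + (k : ℤ) • (π i.succ - π i.castSucc) ≠ π j}

/-- The uniform probability of a set `A` of paths under `P_{unif,L}`. -/
noncomputable def probUnif (L : ℕ) (A : Set (Fin (L + 1) → ℤ × ℤ)) : ℝ :=
  (Nat.card ↥(A ∩ prudentSet L) : ℝ) / (Nat.card ↥(prudentSet L) : ℝ)

/-- Coercion `ℤ² → ℝ²`. -/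
def toR (p : ℤ × ℤ) : ℝ × ℝ := ((p.1 : ℝ), (p.2 : ℝ))

/-- The rescaled interpolated path `π̃^L : [0,1] → ℝ²`. -/
noncomputable def rescaled (L : ℕ) (π : Fin (L + 1) → ℤ × ℤ) (t : ℝ) : ℝ × ℝ :=
  let n : ℕ := ⌊t * L⌋₊
  let p : ℝ × ℝ := toR (π ⟨min n L, by omega⟩)
  let q : ℝ × ℝ := toR (π ⟨min (n + 1) L, by omega⟩)
  (L : ℝ)⁻¹ • (p + (t * L - (n : ℝ)) • (q - p))

/-- Euclidean norm on `ℝ²`. -/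
noncomputable def enorm2 (v : ℝ × ℝ) : ℝ := Real.sqrt (v.1 ^ 2 + v.2 ^ 2)

/-- The four diagonal directions. -/
def evec : ℕ → ℝ × ℝ
  | 1 => (1, 1)
  | 2 => (-1, 1)
  | 3 => (-1, -1)
  | 4 => (1, -1)
  | _ => (0, 0)
/-- `H_t(π)`: the height of the range of `π` up to time `t` (the time is clamped to `L`). -/
noncomputable def heightAt (L : ℕ) (π : Fin (L + 1) → ℤ × ℤ) (t : ℕ) : ℕ :=
  ((Finset.Iic (⟨min t L, by omega⟩ : Fin (L + 1))).image (fun i => (π i).2)).card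

/-- `W_t(π)`: the width of the range of `π` up to time `t` (the time is clamped to `L`). -/
noncomputable def widthAt (L : ℕ) (π : Fin (L + 1) → ℤ × ℤ) (t : ℕ) : ℕ :=
  ((Finset.Iic (⟨min t L, by omega⟩ : Fin (L + 1))).image (fun i => (π i).1)).card

open Classical in
/-- `min{t ∈ (a, L] : f(t) > f(t−1)} − 1`, or `none` if no such time exists. -/
noncomputable def nextTime (L : ℕ) (f : ℕ → ℕ) (a : ℕ) : Option ℕ :=
  if h : ∃ t : ℕ, a < t ∧ t ≤ L ∧ f (t - 1) < f t then some (Nat.find h - 1) else none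

/-- The sequence `s_0 = 0 ≤ s_1 ≤ s_2 ≤ ⋯` of excursion endpoints of `π`
(`s_{2k+1} = ρ_{k+1}` is obtained from the height, `s_{2k+2} = υ_{k+1}` from the width);
`none` encodes the value `+∞`. -/
noncomputable def excTime (L : ℕ) (π : Fin (L + 1) → ℤ × ℤ) : ℕ → Option ℕ
  | 0 => some 0
  | (i + 1) => (excTime L π i).bind fun a =>
      nextTime L (if Even i then heightAt L π else widthAt L π) a

/-- The largest index `i` with `s_i` finite. -/
noncomputable def lastIdx (L : ℕ) (π : Fin (L + 1) → ℤ × ℤ) : ℕ :=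
  sSup {i : ℕ | (excTime L π i).isSome}

/-- The endpoint `s_i` of the `i`-th excursion, where an infinite value is replaced
by `L` (so that the final, possibly incomplete, segment runs up to time `L`). -/
noncomputable def excEnd (L : ℕ) (π : Fin (L + 1) → ℤ × ℤ) (i : ℕ) : ℕ :=
  (excTime L π i).getD L

/-- `T_i(π) = s_i − s_{i−1}`, the length of the `i`-th excursion. -/
noncomputable def excLen (L : ℕ) (π : Fin (L + 1) → ℤ × ℤ) (i : ℕ) : ℕ :=
  excEnd L π i - excEnd L π (i - 1)

/-- The final segment of `π` can be completed into a full excursion by adding a single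
extra step: some one-step prudent extension of `π` has a finite next excursion endpoint. -/
def finalSegmentCompletable (L : ℕ) (π : Fin (L + 1) → ℤ × ℤ) : Prop :=
  ∃ π' : Fin (L + 2) → ℤ × ℤ, (∀ i : Fin (L + 1), π' i.castSucc = π i) ∧
    π' ∈ prudentSet (L + 1) ∧ (excTime (L + 1) π' (lastIdx L π + 1)).isSome

open Classical in
/-- `γ_L(π)`: the number of complete excursions of `π`, counting the final segment when it
can be completed by a single extra step. -/
noncomputable def numExc (L : ℕ) (π : Fin (L + 1) → ℤ × ℤ) : ℕ :=
  lastIdx L π + if finalSegmentCompletable L π then 1 else 0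

/-- `E_i(π) = 1`: the `i`-th excursion crosses the range, i.e. a horizontal (odd `i`)
excursion traverses the full height of the range at its completion time, and a vertical
(even `i`) one the full width. -/
noncomputable def crossesRange (L : ℕ) (π : Fin (L + 1) → ℤ × ℤ) (i : ℕ) : Prop :=
  if i % 2 = 1 then
    ((π ⟨min (excEnd L π i) L, by omega⟩).2 -
        (π ⟨min (excEnd L π (i - 1)) L, by omega⟩).2).natAbs =
      heightAt L π (excEnd L π i) - 1
  else
    ((π ⟨min (excEnd L π i) L, by omega⟩).1 -
        (π ⟨min (excEnd L π (i - 1)) L, by omega⟩).1).natAbs =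
      widthAt L π (excEnd L π i) - 1

/-!
The prudent continuations of a walk are in bijection with those of any other walk that stands in the
same way on its front line, at the same distances from the ends of its range. Counting prudent paths
thus reduces to iterating a transfer operator on functions of this small set of data.

A subharmonic function of this operator shows that, for some `x < √2 - 1`, the number of prudent
paths of length `L` is at least of order `x⁻¹ ^ L`, and a superharmonic one that it is at most of
order `L * x⁻¹ ^ L`. Within an excursion, however, the walk is partially directed, and such walks
only grow like `(1 + √2) ^ t`: the eigenfunction of partially directed walks, divided by `√2` at the
end of each excursion, remains an eigenfunction for prudent walks, so that at most a multiple of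
`√2 ^ m * (1 + √2) ^ t` walks of length `t` have completed at most `m` excursions. Hence the first
`m` excursions last at least `t` with probability at most `K * L * √2 ^ m * r ^ t`, where
`r = x * (1 + √2) < 1`. For `m` of order `log L` this tends to `0` once `t` is a large multiple of
`log L`, which is even better than `(log L) ^ 2`.
-/

namespace PrudentWalk

/-- The coordinate of a site along the direction `u`. -/
def coord (u : ℤ × ℤ) : ℤ × ℤ →ₗ[ℤ] ℤ :=
  u.1 • LinearMap.fst ℤ ℤ ℤ + u.2 • LinearMap.snd ℤ ℤ ℤ

lemma coord_apply (u z : ℤ × ℤ) : coord u z = u.1 * z.1 + u.2 * z.2 := rfl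

lemma coord_comm (u z : ℤ × ℤ) : coord u z = coord z u := by
  simp only [coord_apply]; ring

@[simp]
lemma coord_neg_left (u z : ℤ × ℤ) : coord (-u) z = -coord u z := by
  simp only [coord_apply, Prod.fst_neg, Prod.snd_neg]; ring

/-- The four unit vectors of `ℤ²`. -/
def directions : Finset (ℤ × ℤ) := {(1, 0), (-1, 0), (0, 1), (0, -1)}

lemma mem_directions {s : ℤ × ℤ} : s ∈ directions ↔ IsStep s := by
  simp [directions, IsStep]

lemma card_directions : directions.card = 4 := by decide

/-- Orthonormal lattice frames: pairs of perpendicular unit vectors. -/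
def IsFrame (u v : ℤ × ℤ) : Prop := IsStep u ∧ IsStep v ∧ coord u v = 0

lemma exists_isFrame {s : ℤ × ℤ} (hs : IsStep s) : ∃ v, IsFrame s v := by
  refine ⟨s.swap, hs, ?_⟩
  rcases hs with rfl | rfl | rfl | rfl <;> simp [IsStep, coord_apply]

namespace IsFrame

variable {u v : ℤ × ℤ}

lemma symm (h : IsFrame u v) : IsFrame v u := ⟨h.2.1, h.1, coord_comm u v ▸ h.2.2⟩

lemma neg_right (h : IsFrame u v) : IsFrame u (-v) := by
  obtain ⟨hu, rfl | rfl | rfl | rfl, huv⟩ := h <;>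
    exact ⟨hu, by simp [IsStep], by rw [map_neg, huv, neg_zero]⟩

lemma coord_self (h : IsFrame u v) : coord u u = 1 := by
  obtain ⟨rfl | rfl | rfl | rfl, -⟩ := h <;> rfl

lemma coord_add_smul_self (h : IsFrame u v) (z : ℤ × ℤ) (k : ℤ) :
    coord u (z + k • u) = coord u z + k := by
  rw [map_add, map_smul, h.coord_self, smul_eq_mul, mul_one]

lemma coord_add_smul_right (h : IsFrame u v) (z : ℤ × ℤ) (k : ℤ) :
    coord u (z + k • v) = coord u z := by
  rw [map_add, map_smul, h.2.2, smul_zero, add_zero]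

lemma coord_add_self (h : IsFrame u v) (z : ℤ × ℤ) : coord u (z + u) = coord u z + 1 := by
  simpa using h.coord_add_smul_self z 1

lemma coord_add_right (h : IsFrame u v) (z : ℤ × ℤ) : coord u (z + v) = coord u z := by
  simpa using h.coord_add_smul_right z 1

lemma ext_coord (h : IsFrame u v) {a b : ℤ × ℤ} (hu : coord u a = coord u b)
    (hv : coord v a = coord v b) : a = b := by
  obtain ⟨rfl | rfl | rfl | rfl, rfl | rfl | rfl | rfl, huv⟩ := h <;>
    simp [coord_apply] at hu hv huv <;> exact Prod.ext (by assumption) (by assumption)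

lemma snd_right_eq_zero_iff (h : IsFrame u v) : v.2 = 0 ↔ u.2 ≠ 0 := by
  obtain ⟨rfl | rfl | rfl | rfl, rfl | rfl | rfl | rfl, huv⟩ := h <;>
    simp [coord_apply] at huv ⊢

lemma sum_directions {M : Type*} [AddCommMonoid M] (h : IsFrame u v) (f : ℤ × ℤ → M) :
    ∑ s ∈ directions, f s = f u + f (-u) + f v + f (-v) := by
  have hsum : ∑ s ∈ directions, f s = f (1, 0) + f (-1, 0) + f (0, 1) + f (0, -1) := by
    simp [directions, add_assoc]
  obtain ⟨rfl | rfl | rfl | rfl, rfl | rfl | rfl | rfl, huv⟩ := h <;>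
    simp [coord_apply] at huv <;> simp [hsum] <;> abel

end IsFrame

/-- The coordinate whose extent has to grow for the excursion of index `i + 1` to end: the height
for even `i`, the width for odd `i`. -/
def exitCoord (i : ℕ) (z : ℤ × ℤ) : ℤ := if Even i then z.2 else z.1

lemma exitCoord_succ_eq_of_ne {i : ℕ} {a b : ℤ × ℤ} (hs : IsStep (b - a))
    (h : exitCoord i a ≠ exitCoord i b) : exitCoord (i + 1) a = exitCoord (i + 1) b := by
  have hfix : a.1 = b.1 ∨ a.2 = b.2 := by
    rcases hs with hs | hs | hs | hs <;>
      · obtain ⟨h₁, h₂⟩ := Prod.ext_iff.1 hs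
        simp only [Prod.fst_sub, Prod.snd_sub] at h₁ h₂
        omega
  by_cases hi : Even i <;> simp_all [exitCoord, Nat.even_add_one]

lemma IsFrame.exitCoord_eq_iff {u v : ℤ × ℤ} (h : IsFrame u v) {i : ℕ}
    (hi : Even i ↔ u.2 = 0) (a b : ℤ × ℤ) :
    exitCoord i a = exitCoord i b ↔ coord v a = coord v b := by
  simp only [exitCoord, hi]
  obtain ⟨rfl | rfl | rfl | rfl, rfl | rfl | rfl | rfl, huv⟩ := h <;>
    simp [coord_apply] at huv ⊢

open Classical in
/-- The number of excursions completed by a walk, given the list of its sites from the latest to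
the first. -/
noncomputable def excursionCount : List (ℤ × ℤ) → ℕ
  | [] => 0
  | z :: l => excursionCount l +
      if l ≠ [] ∧ ∀ w ∈ l, exitCoord (excursionCount l) w ≠ exitCoord (excursionCount l) z
      then 1 else 0

/-- A walk with sites `h`, from the latest to the first, may prudently step in the direction `s`. -/
def IsPrudentStep (h : List (ℤ × ℤ)) (s : ℤ × ℤ) : Prop :=
  ∀ k : ℕ, 1 ≤ k → h.headI + (k : ℤ) • s ∉ h

open Classical in
/-- The directions in which a walk with sites `h`, from the latest to the first, may prudently
step. -/
noncomputable def prudentSteps (h : List (ℤ × ℤ)) : Finset (ℤ × ℤ) :=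
  {s ∈ directions | IsPrudentStep h s}

lemma mem_prudentSteps {h : List (ℤ × ℤ)} {s : ℤ × ℤ} :
    s ∈ prudentSteps h ↔ IsStep s ∧ IsPrudentStep h s := by
  simp [prudentSteps, mem_directions]

/-- How a walk stands on the front line, the extreme line of its range in the direction `u`: it has
just reached that line, or its last step along the line was in the direction `v` or `-v`. -/
inductive Heading
  | fresh
  | up
  | down

/-- Exchanges the directions `v` and `-v`. -/
def Heading.flip : Heading → Heading
  | .fresh => .fresh
  | .up => .down
  | .down => .up

/-- What the number of prudent continuations of a walk depends on: its heading, its distances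
`above` and `below` along the front line to the two ends of its range, the `depth` of the range
behind the front line, and the number `count` of completed excursions. -/
structure State where
  heading : Heading
  above : ℕ
  below : ℕ
  depth : ℕ
  count : ℕ

namespace State

/-- Exchanges the directions `v` and `-v`. -/
def flip (σ : State) : State := ⟨σ.heading.flip, σ.below, σ.above, σ.depth, σ.count⟩

lemma flip_heading_eq_down {σ : State} : σ.flip.heading = .down ↔ σ.heading = .up := by
  obtain ⟨_ | _ | _, above, below, depth, count⟩ := σ <;> simp [flip, Heading.flip]

/-- The state after a step in the direction `u`. -/
def advance (σ : State) : State := ⟨.fresh, σ.above, σ.below, σ.depth + 1, σ.count⟩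

/-- The state after a step in the direction `v`. Such a step out of the range ends the current
excursion, and `v` becomes the new front direction. -/
def moveUp : State → State
  | ⟨_, 0, below, depth, count⟩ => ⟨.fresh, 0, depth, below + 1, count + 1⟩
  | ⟨_, above + 1, below, depth, count⟩ => ⟨.up, above, below + 1, depth, count⟩

/-- The state after a step in the direction `-v`. Such a step out of the range ends the current
excursion, and `-v` becomes the new front direction. -/
def moveDown : State → State
  | ⟨_, above, 0, depth, count⟩ => ⟨.fresh, 0, depth, above + 1, count + 1⟩
  | ⟨_, above, below + 1, depth, count⟩ => ⟨.down, above + 1, below, depth, count⟩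

/-- The transfer operator of the walk: the sum of `V` over the states that one prudent step can
lead to. -/
def transfer (V : State → ℝ) (σ : State) : ℝ :=
  match σ.heading with
  | .fresh => V σ.advance + V σ.moveUp + V σ.moveDown
  | .up => V σ.advance + V σ.moveUp
  | .down => V σ.advance + V σ.moveDown

lemma monotone_transfer : Monotone transfer := by
  intro V W hVW σ
  unfold transfer
  split <;> gcongr <;> exact hVW _

lemma transfer_smul (c : ℝ) (V : State → ℝ) : transfer (c • V) = c • transfer V := by
  funext σ
  simp only [transfer, Pi.smul_apply, smul_eq_mul]
  split <;> ring

lemma transfer_add (V W : State → ℝ) : transfer (V + W) = transfer V + transfer W := by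
  funext σ
  simp only [transfer, Pi.add_apply]
  split <;> ring

end State

/-- The walk reached `z` along its front line by a step in the direction `v`: the site `z - v` is
visited, and no visited site of that line lies further in the direction `v` than `z`. -/
def IsHeadingUp (u v z : ℤ × ℤ) (l : List (ℤ × ℤ)) : Prop :=
  z - v ∈ l ∧ ∀ w ∈ l, coord u w = coord u z → coord v w < coord v z

/-- The walk with current site `z` and earlier sites `l` stands on its front line as described by
the given heading. -/
def HasHeading (u v z : ℤ × ℤ) (l : List (ℤ × ℤ)) : Heading → Prop
  | .fresh => ∀ w ∈ l, coord u w < coord u z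
  | .up => IsHeadingUp u v z l
  | .down => IsHeadingUp u (-v) z l

/-- The walk with current site `z` and earlier sites `l` is in the state `σ` in the frame
`(u, v)`. That `side_attained` asks for sites strictly behind the front line makes a step in the
direction `-u` imprudent. -/
structure HasStateIn (u v z : ℤ × ℤ) (l : List (ℤ × ℤ)) (σ : State) : Prop where
  isFrame : IsFrame u v
  count_eq : excursionCount (z :: l) = σ.count
  even_count_iff : Even σ.count ↔ u.2 = 0
  front_bounds : ∀ w ∈ z :: l, coord u z - σ.depth ≤ coord u w ∧ coord u w ≤ coord u z
  side_bounds : ∀ w ∈ z :: l,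
    coord v z - σ.below ≤ coord v w ∧ coord v w ≤ coord v z + σ.above
  front_attained : ∀ y, coord u z - σ.depth ≤ y → y ≤ coord u z → ∃ w ∈ z :: l, coord u w = y
  side_attained : ∀ y, coord v z - σ.below ≤ y → y ≤ coord v z + σ.above →
    ∃ w ∈ z :: l, coord v w = y ∧ coord u w < coord u z
  hasHeading : HasHeading u v z l σ.heading

/-- The walk with current site `z` and earlier sites `l` is in the state `σ` in some frame. -/
def HasState (z : ℤ × ℤ) (l : List (ℤ × ℤ)) (σ : State) : Prop :=
  ∃ u v, HasStateIn u v z l σ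

namespace HasStateIn

variable {u v z : ℤ × ℤ} {l : List (ℤ × ℤ)} {σ : State} {above below depth count : ℕ}
  {heading : Heading}

lemma flip (h : HasStateIn u v z l σ) : HasStateIn u (-v) z l σ.flip where
  isFrame := h.isFrame.neg_right
  count_eq := h.count_eq
  even_count_iff := h.even_count_iff
  front_bounds := h.front_bounds
  side_bounds w hw := by
    have := h.side_bounds w hw
    simp only [coord_neg_left, State.flip]
    omega
  front_attained := h.front_attained
  side_attained y hy₁ hy₂ := by
    simp only [coord_neg_left, State.flip] at hy₁ hy₂
    obtain ⟨w, hw, hwy, hwz⟩ := h.side_attained (-y) (by omega) (by omega)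
    exact ⟨w, hw, by rw [coord_neg_left]; omega, hwz⟩
  hasHeading := by
    obtain ⟨_ | _ | _, above, below, depth, count⟩ := σ <;>
      simpa [HasHeading, State.flip, Heading.flip] using h.hasHeading

lemma exitCoord_eq_iff (h : HasStateIn u v z l σ) (a b : ℤ × ℤ) :
    exitCoord (excursionCount (z :: l)) a = exitCoord (excursionCount (z :: l)) b ↔
      coord v a = coord v b :=
  h.isFrame.exitCoord_eq_iff (h.count_eq ▸ h.even_count_iff) a b

lemma excursionCount_cons_of_mem (h : HasStateIn u v z l σ) {s w : ℤ × ℤ} (hw : w ∈ z :: l)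
    (hws : coord v w = coord v s) : excursionCount (s :: z :: l) = σ.count := by
  rw [excursionCount, if_neg, h.count_eq, add_zero]
  exact fun hexit => hexit.2 w hw ((h.exitCoord_eq_iff w s).2 hws)

lemma excursionCount_cons_of_forall_ne (h : HasStateIn u v z l σ) {s : ℤ × ℤ}
    (hs : ∀ w ∈ z :: l, coord v w ≠ coord v s) :
    excursionCount (s :: z :: l) = σ.count + 1 := by
  rw [excursionCount, if_pos, h.count_eq]
  exact ⟨List.cons_ne_nil _ _, fun w hw e => hs w hw ((h.exitCoord_eq_iff w s).1 e)⟩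

lemma isPrudentStep_advance (h : HasStateIn u v z l σ) : IsPrudentStep (z :: l) u := by
  intro k hk hmem
  have hle := (h.front_bounds _ hmem).2
  rw [List.headI_cons, h.isFrame.coord_add_smul_self] at hle
  omega

lemma not_isPrudentStep_retreat (h : HasStateIn u v z l σ) : ¬ IsPrudentStep (z :: l) (-u) := by
  intro hstep
  obtain ⟨w, hw, hwv, hwu⟩ := h.side_attained (coord v z) (by omega) (by omega)
  obtain ⟨k, hk⟩ := Int.eq_ofNat_of_zero_le (a := coord u z - coord u w) (by omega)
  have hline : z + (k : ℤ) • -u = w := by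
    have hsmul : z + (k : ℤ) • -u = z + (-k : ℤ) • u := by rw [smul_neg, neg_smul]
    apply h.isFrame.ext_coord
    · rw [hsmul, h.isFrame.coord_add_smul_self]; omega
    · rw [hsmul, h.isFrame.symm.coord_add_smul_right, hwv]
  exact hstep k (by omega) (by rwa [List.headI_cons, hline])

lemma not_isPrudentStep_up (h : HasStateIn u v z l σ) (hσ : σ.heading = .down) :
    ¬ IsPrudentStep (z :: l) v := by
  have hdown := h.hasHeading
  rw [hσ] at hdown
  exact fun hstep => hstep 1 le_rfl (by simpa using Or.inr hdown.1)

lemma coord_lt_of_mem (h : HasStateIn u v z l σ) (hσ : σ.heading ≠ .down) {w : ℤ × ℤ}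
    (hw : w ∈ l) (hwz : coord u w = coord u z) : coord v w < coord v z := by
  have hhead := h.hasHeading
  cases hσ' : σ.heading <;> rw [hσ'] at hhead
  · exact absurd hwz (hhead w hw).ne
  · exact hhead.2 w hw hwz
  · exact absurd hσ' hσ

lemma isPrudentStep_up (h : HasStateIn u v z l σ) (hσ : σ.heading ≠ .down) :
    IsPrudentStep (z :: l) v := by
  intro k hk hmem
  rw [List.headI_cons] at hmem
  have hu := h.isFrame.coord_add_smul_right z k
  have hv := h.isFrame.symm.coord_add_smul_self z k
  rcases List.mem_cons.1 hmem with hz | hl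
  · rw [hz] at hv; omega
  · have := h.coord_lt_of_mem hσ hl hu; omega

lemma advance (h : HasStateIn u v z l σ) : HasStateIn u v (z + u) (z :: l) σ.advance := by
  have hu := h.isFrame.coord_add_self z
  have hv := h.isFrame.symm.coord_add_right z
  refine ⟨h.isFrame, h.excursionCount_cons_of_mem List.mem_cons_self hv.symm, h.even_count_iff,
    ?front_bounds, ?side_bounds, ?front_attained, ?side_attained, ?hasHeading⟩ <;>
    simp only [State.advance, Nat.cast_add, Nat.cast_one]
  case front_bounds =>
    refine List.forall_mem_cons.2 ⟨by omega, fun w hw => ?_⟩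
    have := h.front_bounds w hw; omega
  case side_bounds =>
    refine List.forall_mem_cons.2 ⟨by omega, fun w hw => ?_⟩
    have := h.side_bounds w hw; omega
  case front_attained =>
    intro y hy₁ hy₂
    rcases eq_or_lt_of_le hy₂ with rfl | hy₂
    · exact ⟨_, List.mem_cons_self, rfl⟩
    · obtain ⟨w, hw, hwy⟩ := h.front_attained y (by omega) (by omega)
      exact ⟨w, List.mem_cons_of_mem _ hw, hwy⟩
  case side_attained =>
    intro y hy₁ hy₂
    obtain ⟨w, hw, hwy, hwu⟩ := h.side_attained y (by omega) (by omega)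
    exact ⟨w, List.mem_cons_of_mem _ hw, hwy, by omega⟩
  case hasHeading =>
    intro w hw
    have := h.front_bounds w hw; omega

lemma moveUp_inside (h : HasStateIn u v z l ⟨heading, above + 1, below, depth, count⟩)
    (hheading : heading ≠ .down) :
    HasStateIn u v (z + v) (z :: l) ⟨.up, above, below + 1, depth, count⟩ := by
  have hu := h.isFrame.coord_add_right z
  have hv := h.isFrame.symm.coord_add_self z
  have hcount : excursionCount ((z + v) :: z :: l) = count := by
    obtain ⟨w, hw, hwv, -⟩ := h.side_attained (coord v z + 1) (by omega) (by push_cast; omega)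
    exact h.excursionCount_cons_of_mem hw (by omega)
  refine ⟨h.isFrame, hcount, h.even_count_iff,
    ?front_bounds, ?side_bounds, ?front_attained, ?side_attained, ?hasHeading⟩ <;>
    simp only [Nat.cast_add, Nat.cast_one]
  case front_bounds =>
    refine List.forall_mem_cons.2 ⟨by omega, fun w hw => ?_⟩
    have := h.front_bounds w hw; simp only at this; omega
  case side_bounds =>
    refine List.forall_mem_cons.2 ⟨by omega, fun w hw => ?_⟩
    have := h.side_bounds w hw; push_cast at this; omega
  case front_attained =>
    intro y hy₁ hy₂
    obtain ⟨w, hw, hwy⟩ := h.front_attained y (by simp only; omega) (by omega)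
    exact ⟨w, List.mem_cons_of_mem _ hw, hwy⟩
  case side_attained =>
    intro y hy₁ hy₂
    obtain ⟨w, hw, hwy, hwu⟩ := h.side_attained y (by simp only; omega) (by push_cast; omega)
    exact ⟨w, List.mem_cons_of_mem _ hw, hwy, by omega⟩
  case hasHeading =>
    refine ⟨by simp, List.forall_mem_cons.2 ⟨fun _ => by omega, fun w hw hwu => ?_⟩⟩
    have := h.coord_lt_of_mem hheading hw (by omega); omega

lemma moveUp_exit (h : HasStateIn u v z l ⟨heading, 0, below, depth, count⟩) :
    HasStateIn v u (z + v) (z :: l) ⟨.fresh, 0, depth, below + 1, count + 1⟩ := by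
  have hu := h.isFrame.coord_add_right z
  have hv := h.isFrame.symm.coord_add_self z
  have hside : ∀ w ∈ z :: l, coord v z - below ≤ coord v w ∧ coord v w ≤ coord v z := by
    simpa using h.side_bounds
  have hparity : Even (count + 1) ↔ v.2 = 0 := by
    rw [h.isFrame.snd_right_eq_zero_iff, Nat.even_add_one, h.even_count_iff]
  have hnew : ∀ w ∈ z :: l, coord v w < coord v (z + v) := fun w hw => by
    have := hside w hw; omega
  refine ⟨h.isFrame.symm, h.excursionCount_cons_of_forall_ne fun w hw => (hnew w hw).ne, hparity,
    ?front_bounds, ?side_bounds, ?front_attained, ?side_attained, hnew⟩ <;>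
    simp only [Nat.cast_add, Nat.cast_one, Nat.cast_zero, add_zero]
  case front_bounds =>
    refine List.forall_mem_cons.2 ⟨by omega, fun w hw => ?_⟩
    have := hside w hw; omega
  case side_bounds =>
    refine List.forall_mem_cons.2 ⟨by omega, fun w hw => ?_⟩
    have := h.front_bounds w hw; simp only at this; omega
  case front_attained =>
    intro y hy₁ hy₂
    rcases eq_or_lt_of_le hy₂ with rfl | hy₂
    · exact ⟨_, List.mem_cons_self, rfl⟩
    · obtain ⟨w, hw, hwy, -⟩ := h.side_attained y (by simp only; omega) (by push_cast; omega)
      exact ⟨w, List.mem_cons_of_mem _ hw, hwy⟩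
  case side_attained =>
    intro y hy₁ hy₂
    obtain ⟨w, hw, hwy⟩ := h.front_attained y (by simp only; omega) (by omega)
    exact ⟨w, List.mem_cons_of_mem _ hw, hwy, hnew w hw⟩

lemma moveUp (h : HasStateIn u v z l σ) (hσ : σ.heading ≠ .down) :
    HasState (z + v) (z :: l) σ.moveUp := by
  obtain ⟨heading, _ | above, below, depth, count⟩ := σ
  · exact ⟨v, u, h.moveUp_exit⟩
  · exact ⟨u, v, h.moveUp_inside hσ⟩

lemma moveDown (h : HasStateIn u v z l σ) (hσ : σ.heading ≠ .up) :
    HasState (z + -v) (z :: l) σ.moveDown := by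
  have hflip : σ.flip.heading ≠ .down := State.flip_heading_eq_down.not.2 hσ
  obtain ⟨heading, above, _ | below, depth, count⟩ := σ
  · exact ⟨-v, u, h.flip.moveUp_exit⟩
  · have h' := (h.flip.moveUp_inside hflip).flip
    rw [neg_neg] at h'
    exact ⟨u, v, h'⟩

end HasStateIn

lemma HasState.sum_prudentSteps {z : ℤ × ℤ} {l : List (ℤ × ℤ)} {σ : State}
    (h : HasState z l σ) {f : ℤ × ℤ → ℝ} {V : State → ℝ}
    (hf : ∀ s τ, HasState (z + s) (z :: l) τ → f s = V τ) :
    ∑ s ∈ prudentSteps (z :: l), f s = State.transfer V σ := by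
  obtain ⟨u, v, h⟩ := h
  have hadvance := hf u _ ⟨u, v, h.advance⟩
  have hup (hσ : σ.heading ≠ .down) := hf v _ (h.moveUp hσ)
  have hdown (hσ : σ.heading ≠ .up) := hf (-v) _ (h.moveDown hσ)
  have hprudent_down (hσ : σ.heading ≠ .up) : IsPrudentStep (z :: l) (-v) :=
    h.flip.isPrudentStep_up (State.flip_heading_eq_down.not.2 hσ)
  have hblocked_down (hσ : σ.heading = .up) : ¬ IsPrudentStep (z :: l) (-v) :=
    h.flip.not_isPrudentStep_up (State.flip_heading_eq_down.2 hσ)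
  rw [prudentSteps, Finset.sum_filter, h.isFrame.sum_directions, if_pos h.isPrudentStep_advance,
    if_neg h.not_isPrudentStep_retreat, hadvance, add_zero, State.transfer]
  cases hσ : σ.heading <;> simp only [hσ, ne_eq, reduceCtorEq, not_false_eq_true,
    forall_const] at hup hdown hprudent_down hblocked_down
  · rw [if_pos (h.isPrudentStep_up (by simp [hσ])), if_pos hprudent_down, hup, hdown]
  · rw [if_pos (h.isPrudentStep_up (by simp [hσ])), if_neg hblocked_down, hup, add_zero]
  · rw [if_neg (h.not_isPrudentStep_up hσ), if_pos hprudent_down, hdown, add_zero]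

/-- The sum of `φ` over the prudent continuations by `n` steps of the walk with sites `h`, listed
from the latest to the first. -/
noncomputable def continuationSum (φ : List (ℤ × ℤ) → ℝ) : ℕ → List (ℤ × ℤ) → ℝ
  | 0, h => φ h
  | n + 1, h => ∑ s ∈ prudentSteps h, continuationSum φ n ((h.headI + s) :: h)

lemma HasState.continuationSum_eq {φ : List (ℤ × ℤ) → ℝ} {V : State → ℝ}
    (hφ : ∀ z l σ, HasState z l σ → φ (z :: l) = V σ) {z : ℤ × ℤ} {l : List (ℤ × ℤ)} {σ : State}
    (h : HasState z l σ) (n : ℕ) : continuationSum φ n (z :: l) = State.transfer^[n] V σ := by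
  induction n generalizing z l σ with
  | zero => exact hφ z l σ h
  | succ n ih =>
    rw [Function.iterate_succ_apply']
    exact h.sum_prudentSteps fun s τ hτ => ih hτ

lemma continuationSum_add (φ : List (ℤ × ℤ) → ℝ) (i n : ℕ) (h : List (ℤ × ℤ)) :
    continuationSum φ (i + n) h = continuationSum (continuationSum φ n) i h := by
  induction i generalizing h with
  | zero => rw [zero_add]; rfl
  | succ i ih =>
    rw [Nat.succ_add]
    exact Finset.sum_congr rfl fun s _ => ih _

lemma continuationSum_comp_drop (ψ : List (ℤ × ℤ) → ℝ) (n : ℕ) (h : List (ℤ × ℤ)) :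
    continuationSum (fun h => ψ (h.drop n)) n h = ψ h * continuationSum 1 n h := by
  induction n generalizing ψ h with
  | zero => simp [continuationSum]
  | succ n ih =>
    simp only [continuationSum, Finset.mul_sum]
    refine Finset.sum_congr rfl fun s _ => ?_
    simp only [← List.tail_drop]
    exact ih (fun h => ψ h.tail) _

lemma exists_hasState_pair {s : ℤ × ℤ} (hs : IsStep s) :
    ∃ k, HasState s [0] ⟨.fresh, 0, 0, 1, k⟩ := by
  obtain ⟨v, hv⟩ := exists_isFrame hs
  have hus := hv.coord_self
  have hvs : coord v s = 0 := hv.symm.2.2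
  refine ⟨excursionCount [s, 0], s, v, hv, rfl, ?_, ?_, ?_, ?_, ?_, ?_⟩
  · rcases hs with rfl | rfl | rfl | rfl <;> simp [excursionCount, exitCoord]
  · simp [hus]
  · simp [hvs]
  · intro y hy₁ hy₂
    rcases (show y = 0 ∨ y = 1 by simp only [hus] at hy₁ hy₂; omega) with rfl | rfl
    · exact ⟨0, by simp, map_zero _⟩
    · exact ⟨s, by simp, hus⟩
  · intro y hy₁ hy₂
    exact ⟨0, by simp, by simp only [hvs, map_zero] at hy₁ hy₂ ⊢; omega, by simp [hus]⟩
  · simp [HasHeading, hus]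

lemma continuationSum_succ_singleton_zero (φ : List (ℤ × ℤ) → ℝ) (n : ℕ) :
    continuationSum φ (n + 1) [0] = ∑ s ∈ directions, continuationSum φ n [s, 0] := by
  have hsteps : prudentSteps [0] = directions := by
    ext s
    rw [mem_prudentSteps, mem_directions, and_iff_left_iff_imp]
    rintro hs k hk
    have hk' : k ≠ 0 := by omega
    rcases hs with rfl | rfl | rfl | rfl <;> simp [hk']
  simp [continuationSum, hsteps]

/-- The fugacity at which the generating function of two-sided prudent walks diverges: their number
grows like `x⁻¹ ^ n`, faster than the number of partially directed walks, `(1 + √2) ^ n`. -/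
structure IsCriticalFugacity (x : ℝ) : Prop where
  pos : 0 < x
  lt : x < √2 - 1
  eq : 1 - 2 * x - 2 * x ^ 2 + 2 * x ^ 3 = 0

lemma exists_isCriticalFugacity : ∃ x, IsCriticalFugacity x := by
  have hsq : √2 ^ 2 = 2 := Real.sq_sqrt zero_le_two
  have hgt : 1 < √2 := Real.one_lt_sqrt_two
  have hneg : 1 - 2 * (√2 - 1) - 2 * (√2 - 1) ^ 2 + 2 * (√2 - 1) ^ 3 < 0 := by
    have hvalue : 1 - 2 * (√2 - 1) - 2 * (√2 - 1) ^ 2 + 2 * (√2 - 1) ^ 3 = 12 * √2 - 17 := by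
      linear_combination (2 * √2 - 8) * hsq
    nlinarith
  have hcont : ContinuousOn (fun x : ℝ => 1 - 2 * x - 2 * x ^ 2 + 2 * x ^ 3) (Icc 0 (√2 - 1)) := by
    fun_prop
  obtain ⟨x, hx, hroot⟩ := intermediate_value_Ioo' (by linarith) hcont
    (show (0 : ℝ) ∈ Ioo _ _ from ⟨hneg, by norm_num⟩)
  exact ⟨x, hx.1, hx.2, hroot⟩

/-- The decay factor, at fugacity `x`, of a state that heads away from a corner of its range. -/
noncomputable def awayFactor (x : ℝ) : ℝ := x / (1 - 2 * x ^ 2)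

section awayFactor

variable {x : ℝ}

lemma awayFactor_eq (hx : 2 * x ^ 2 ≠ 1) :
    awayFactor x = x * (1 + awayFactor x * (2 * x)) := by
  have hg : awayFactor x * (1 - 2 * x ^ 2) = x := div_mul_cancel₀ _ (sub_ne_zero.2 hx.symm)
  linear_combination hg

lemma awayFactor_nonneg (hx₀ : 0 ≤ x) (hx : 2 * x ≤ 1) : 0 ≤ awayFactor x :=
  div_nonneg hx₀ (by nlinarith)

lemma awayFactor_le_one (hx₀ : 0 ≤ x) (hx : 2 * x ≤ 1) : awayFactor x ≤ 1 :=
  div_le_one_of_le₀ (by nlinarith) (by nlinarith)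

end awayFactor

namespace IsCriticalFugacity

variable {x : ℝ}

lemma two_mul_lt_one (hx : IsCriticalFugacity x) : 2 * x < 1 := by
  have : √2 < 3 / 2 := by rw [Real.sqrt_lt' (by norm_num)]; norm_num
  linarith [hx.lt]

lemma mul_one_add_sqrt_two_lt_one (hx : IsCriticalFugacity x) : x * (1 + √2) < 1 := by
  have hsq : √2 ^ 2 = 2 := Real.sq_sqrt zero_le_two
  nlinarith [hx.lt, Real.sqrt_nonneg 2]

lemma awayFactor_eq (hx : IsCriticalFugacity x) :
    awayFactor x = x * (1 + awayFactor x * (2 * x)) :=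
  PrudentWalk.awayFactor_eq (by nlinarith [hx.pos, hx.two_mul_lt_one])

lemma mul_two_add_awayFactor (hx : IsCriticalFugacity x) :
    x * (1 + 1 + awayFactor x * (2 * x)) = 1 := by
  have hne : 1 - 2 * x ^ 2 ≠ 0 := by nlinarith [hx.pos, hx.two_mul_lt_one]
  have hg : awayFactor x * (1 - 2 * x ^ 2) = x := div_mul_cancel₀ _ hne
  apply mul_right_cancel₀ hne
  linear_combination (2 * x ^ 2) * hg - hx.eq

end IsCriticalFugacity

namespace State

/-- A solution of the transfer equation at the critical fugacity `x`, up to an error at the ends of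
the range, which decays with the distance of the walk to the end of its range in the direction
`v`. -/
noncomputable def cornerWeight (x : ℝ) (σ : State) : ℝ :=
  match σ.heading with
  | .fresh => (2 * x) ^ σ.above
  | .up => (2 * x) ^ (σ.above + 1)
  | .down => awayFactor x * (2 * x) ^ σ.above

/-- The price of ending the excursion in the superharmonic function `cornerPotential`. The end of
the excursion divides it by `exp ((2 * x) ^ depth) ≥ 1 + (2 * x) ^ depth`, which is the sum of the
weights of the two corners of the new front line. -/
noncomputable def exitFactor (x : ℝ) (σ : State) : ℝ :=
  Real.exp (((2 * x) ^ (σ.above + σ.below + 1) + (2 * x) ^ σ.depth) / (1 - 2 * x))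

/-- A bounded superharmonic majorant, at the critical fugacity `x`, of the weights of the two
corners of the front line. -/
noncomputable def cornerPotential (x : ℝ) (σ : State) : ℝ :=
  exitFactor x σ * (cornerWeight x σ + cornerWeight x σ.flip)

/-- The eigenfunction of the transfer operator of partially directed walks, with eigenvalue
`1 + √2`. -/
noncomputable def headingWeight (σ : State) : ℝ :=
  match σ.heading with
  | .fresh => √2
  | .up | .down => 1

section cornerWeight

variable {x : ℝ}

lemma cornerWeight_nonneg (hx₀ : 0 ≤ x) (hx : 2 * x ≤ 1) (σ : State) : 0 ≤ cornerWeight x σ := by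
  have := awayFactor_nonneg hx₀ hx
  unfold cornerWeight
  split <;> positivity

lemma cornerWeight_le_one (hx₀ : 0 ≤ x) (hx : 2 * x ≤ 1) (σ : State) : cornerWeight x σ ≤ 1 := by
  have hpow (n : ℕ) : (2 * x) ^ n ≤ 1 := pow_le_one₀ (by positivity) hx
  unfold cornerWeight
  split
  · exact hpow _
  · exact hpow _
  · exact mul_le_one₀ (awayFactor_le_one hx₀ hx) (by positivity) (hpow _)

lemma cornerWeight_moveUp (x : ℝ) (σ : State) :
    cornerWeight x σ.moveUp = (2 * x) ^ σ.above := by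
  obtain ⟨heading, _ | above, below, depth, count⟩ := σ <;> rfl

lemma le_cornerWeight_moveDown (hx₀ : 0 ≤ x) (hx : 2 * x ≤ 1) (σ : State) :
    awayFactor x * (2 * x) ^ (σ.above + 1) ≤ cornerWeight x σ.moveDown := by
  obtain ⟨heading, above, _ | below, depth, count⟩ := σ
  · exact mul_le_one₀ (awayFactor_le_one hx₀ hx) (by positivity) (pow_le_one₀ (by positivity) hx)
  · exact le_rfl

lemma cornerWeight_le_smul_transfer (hx : IsCriticalFugacity x) :
    cornerWeight x ≤ x • transfer (cornerWeight x) := by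
  intro σ
  have hx₀ := hx.pos
  have hdown := le_cornerWeight_moveDown hx₀.le hx.two_mul_lt_one.le σ
  rw [Pi.smul_apply, smul_eq_mul, transfer, cornerWeight_moveUp,
    show cornerWeight x σ.advance = (2 * x) ^ σ.above from rfl, cornerWeight]
  cases σ.heading <;> dsimp only
  · calc (2 * x) ^ σ.above
        = x * ((2 * x) ^ σ.above + (2 * x) ^ σ.above + awayFactor x * (2 * x) ^ (σ.above + 1)) := by
          linear_combination -(2 * x) ^ σ.above * hx.mul_two_add_awayFactor
      _ ≤ _ := by gcongr
  · exact le_of_eq (by ring)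
  · calc awayFactor x * (2 * x) ^ σ.above
        = x * ((2 * x) ^ σ.above + awayFactor x * (2 * x) ^ (σ.above + 1)) := by
          linear_combination (2 * x) ^ σ.above * hx.awayFactor_eq
      _ ≤ _ := by gcongr

lemma exp_mul_one_add_pow_le {y : ℝ} (hy : y ≠ 1) (a b : ℕ) :
    Real.exp ((y ^ (b + 1) + y ^ a) / (1 - y)) * (1 + y ^ b) ≤
      Real.exp ((y ^ a + y ^ b) / (1 - y)) := by
  have hexp : (y ^ a + y ^ b) / (1 - y) = (y ^ (b + 1) + y ^ a) / (1 - y) + y ^ b := by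
    field_simp [sub_ne_zero.2 hy.symm]
    ring
  rw [hexp, Real.exp_add, add_comm 1]
  gcongr
  exact Real.add_one_le_exp _

lemma cornerPotential_advance_le (hx₀ : 0 ≤ x) (hx : 2 * x < 1) (σ : State) :
    cornerPotential x σ.advance ≤
      exitFactor x σ * ((2 * x) ^ σ.above + (2 * x) ^ σ.below) := by
  have hpow : (2 * x) ^ (σ.depth + 1) ≤ (2 * x) ^ σ.depth :=
    pow_le_pow_of_le_one (by positivity) hx.le σ.depth.le_succ
  have : 0 < 1 - 2 * x := by linarith
  simp only [cornerPotential, exitFactor, cornerWeight, advance, flip, Heading.flip]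
  gcongr

lemma cornerPotential_moveUp_le (hx₀ : 0 ≤ x) (hx : 2 * x < 1) (σ : State) :
    cornerPotential x σ.moveUp ≤
      exitFactor x σ * ((2 * x) ^ σ.above + awayFactor x * (2 * x) ^ (σ.below + 1)) := by
  have hg := awayFactor_nonneg hx₀ hx.le
  obtain ⟨heading, _ | above, below, depth, count⟩ := σ <;>
    simp only [cornerPotential, exitFactor, cornerWeight, moveUp, flip, Heading.flip]
  · rw [zero_add, zero_add, pow_zero]
    exact (exp_mul_one_add_pow_le hx.ne _ _).trans
      (le_mul_of_one_le_right (Real.exp_nonneg _) (le_add_of_nonneg_right (by positivity)))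
  · rw [show above + (below + 1) + 1 = above + 1 + below + 1 by ring]

lemma cornerPotential_flip_moveUp (x : ℝ) (σ : State) :
    cornerPotential x σ.flip.moveUp = cornerPotential x σ.moveDown := by
  obtain ⟨heading, above, _ | below, depth, count⟩ := σ
  · rfl
  · simp only [cornerPotential, exitFactor, cornerWeight, moveUp, moveDown, flip, Heading.flip]
    rw [show below + (above + 1) + 1 = above + 1 + below + 1 by ring, add_comm (_ ^ _) (_ * _)]

lemma exitFactor_flip (x : ℝ) (σ : State) : exitFactor x σ.flip = exitFactor x σ := by
  simp only [exitFactor, flip, add_comm σ.below]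

lemma cornerPotential_moveDown_le (hx₀ : 0 ≤ x) (hx : 2 * x < 1) (σ : State) :
    cornerPotential x σ.moveDown ≤
      exitFactor x σ * ((2 * x) ^ σ.below + awayFactor x * (2 * x) ^ (σ.above + 1)) := by
  rw [← cornerPotential_flip_moveUp, ← exitFactor_flip]
  exact cornerPotential_moveUp_le hx₀ hx σ.flip

lemma smul_transfer_cornerPotential_le (hx : IsCriticalFugacity x) :
    x • transfer (cornerPotential x) ≤ cornerPotential x := by
  intro σ
  have hx₀ := hx.pos
  have hadvance := cornerPotential_advance_le hx₀.le hx.two_mul_lt_one σ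
  have hup := cornerPotential_moveUp_le hx₀.le hx.two_mul_lt_one σ
  have hdown := cornerPotential_moveDown_le hx₀.le hx.two_mul_lt_one σ
  rw [Pi.smul_apply, smul_eq_mul, transfer, cornerPotential.eq_1 x σ]
  simp only [cornerWeight, flip]
  cases σ.heading <;> simp only [Heading.flip]
  · refine (mul_le_mul_of_nonneg_left (add_le_add (add_le_add hadvance hup) hdown) hx₀.le).trans_eq
      ?_
    linear_combination
      exitFactor x σ * ((2 * x) ^ σ.above + (2 * x) ^ σ.below) * hx.mul_two_add_awayFactor
  · refine (mul_le_mul_of_nonneg_left (add_le_add hadvance hup) hx₀.le).trans_eq ?_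
    linear_combination -exitFactor x σ * (2 * x) ^ σ.below * hx.awayFactor_eq
  · refine (mul_le_mul_of_nonneg_left (add_le_add hadvance hdown) hx₀.le).trans_eq ?_
    linear_combination -exitFactor x σ * (2 * x) ^ σ.above * hx.awayFactor_eq

lemma cornerWeight_add_le_cornerPotential (hx₀ : 0 ≤ x) (hx : 2 * x ≤ 1) (σ : State) :
    cornerWeight x σ + cornerWeight x σ.flip ≤ cornerPotential x σ := by
  have : 0 ≤ 1 - 2 * x := by linarith
  exact le_mul_of_one_le_left
    (add_nonneg (cornerWeight_nonneg hx₀ hx σ) (cornerWeight_nonneg hx₀ hx σ.flip))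
    (Real.one_le_exp (by positivity))

lemma cornerPotential_le (hx₀ : 0 ≤ x) (hx : 2 * x ≤ 1) (σ : State) :
    cornerPotential x σ ≤ Real.exp (2 / (1 - 2 * x)) * 2 := by
  have hpow (n : ℕ) : (2 * x) ^ n ≤ 1 := pow_le_one₀ (by positivity) hx
  have : 0 ≤ 1 - 2 * x := by linarith
  refine mul_le_mul (Real.exp_le_exp.2 ?_) ?_
    (add_nonneg (cornerWeight_nonneg hx₀ hx σ) (cornerWeight_nonneg hx₀ hx σ.flip))
    (Real.exp_nonneg _)
  · gcongr
    linarith [hpow (σ.above + σ.below + 1), hpow σ.depth]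
  · linarith [cornerWeight_le_one hx₀ hx σ, cornerWeight_le_one hx₀ hx σ.flip]

end cornerWeight

section headingWeight

lemma one_le_headingWeight (σ : State) : 1 ≤ headingWeight σ := by
  unfold headingWeight
  split
  exacts [Real.one_lt_sqrt_two.le, le_rfl, le_rfl]

lemma headingWeight_le (σ : State) : headingWeight σ ≤ √2 := by
  unfold headingWeight
  split
  exacts [le_rfl, Real.one_lt_sqrt_two.le, Real.one_lt_sqrt_two.le]

lemma headingWeight_moveUp_le {y : ℝ} (hy : 0 ≤ y) (σ : State) :
    headingWeight σ.moveUp ≤ 1 + y ^ σ.above := by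
  obtain ⟨heading, _ | above, below, depth, count⟩ := σ
  · norm_num [moveUp, headingWeight, Real.sqrt_le_iff]
  · exact le_add_of_nonneg_right (by positivity)

lemma headingWeight_moveDown_le {y : ℝ} (hy : 0 ≤ y) (σ : State) :
    headingWeight σ.moveDown ≤ 1 + y ^ σ.below := by
  obtain ⟨heading, above, _ | below, depth, count⟩ := σ
  · norm_num [moveDown, headingWeight, Real.sqrt_le_iff]
  · exact le_add_of_nonneg_right (by positivity)

lemma smul_transfer_headingWeight_le {x : ℝ} (hx₀ : 0 ≤ x) (hx : x * (1 + √2) ≤ 1)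
    (hx' : 2 * x ≤ 1) :
    x • transfer headingWeight ≤ headingWeight + cornerPotential x := by
  intro σ
  have hup := mul_le_mul_of_nonneg_left
    (headingWeight_moveUp_le (y := 2 * x) (by positivity) σ) hx₀
  have hdown := mul_le_mul_of_nonneg_left
    (headingWeight_moveDown_le (y := 2 * x) (by positivity) σ) hx₀
  have habove : 0 ≤ (2 * x) ^ σ.above := by positivity
  have hbelow : 0 ≤ (2 * x) ^ σ.below := by positivity
  have hcorner := cornerWeight_add_le_cornerPotential hx₀ hx' σ
  have haway := awayFactor_nonneg hx₀ hx'
  rw [Pi.smul_apply, Pi.add_apply, smul_eq_mul, transfer,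
    show headingWeight σ.advance = √2 from rfl, headingWeight.eq_1 σ]
  simp only [cornerWeight, flip] at hcorner
  cases hσ : σ.heading <;> simp only [hσ, Heading.flip] at hcorner ⊢
  · have hfresh : x * (√2 + 1 + 1) ≤ √2 := by
      nlinarith [Real.sq_sqrt (zero_le_two (α := ℝ)), Real.sqrt_nonneg 2]
    nlinarith
  · rw [pow_succ] at hcorner
    nlinarith [mul_nonneg haway hbelow, mul_nonneg hx₀ habove]
  · rw [pow_succ] at hcorner
    nlinarith [mul_nonneg haway habove, mul_nonneg hx₀ hbelow]

end headingWeight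

/-- The count of completed excursions is damped so that leaving the range costs no more than a step
inside it. -/
noncomputable def excursionWeight (σ : State) : ℝ := headingWeight σ / √2 ^ σ.count

lemma transfer_excursionWeight : transfer excursionWeight = (1 + √2) • excursionWeight := by
  funext σ
  have hsq : √2 ^ 2 = 2 := Real.sq_sqrt zero_le_two
  have hup : excursionWeight σ.moveUp = 1 / √2 ^ σ.count := by
    obtain ⟨heading, _ | above, below, depth, count⟩ := σ
    · simp only [excursionWeight, moveUp, headingWeight, pow_succ]
      field_simp
    · rfl
  have hdown : excursionWeight σ.moveDown = 1 / √2 ^ σ.count := by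
    obtain ⟨heading, above, _ | below, depth, count⟩ := σ
    · simp only [excursionWeight, moveDown, headingWeight, pow_succ]
      field_simp
    · rfl
  rw [transfer, hup, hdown, show excursionWeight σ.advance = √2 / √2 ^ σ.count from rfl,
    Pi.smul_apply, smul_eq_mul, excursionWeight.eq_1 σ, headingWeight]
  cases σ.heading <;> dsimp only
  · linear_combination -(√2 ^ σ.count)⁻¹ * hsq
  · ring
  · ring

section iterate

variable {x : ℝ}

lemma iterate_transfer_le {V W : State → ℝ} {μ : ℝ} (hμ : 0 ≤ μ) (hW : transfer W ≤ μ • W)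
    (hV : V ≤ W) (n : ℕ) : transfer^[n] V ≤ μ ^ n • W := by
  induction n with
  | zero => simpa using hV
  | succ n ih =>
    calc transfer^[n + 1] V = transfer (transfer^[n] V) := Function.iterate_succ_apply' _ _ _
      _ ≤ transfer (μ ^ n • W) := monotone_transfer ih
      _ = μ ^ n • transfer W := transfer_smul _ _
      _ ≤ μ ^ n • μ • W := smul_le_smul_of_nonneg_left hW (pow_nonneg hμ n)
      _ = μ ^ (n + 1) • W := by rw [smul_smul, pow_succ]

lemma le_iterate_transfer {V W : State → ℝ} {μ : ℝ} (hμ : 0 ≤ μ) (hW : μ • W ≤ transfer W)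
    (hV : W ≤ V) (n : ℕ) : μ ^ n • W ≤ transfer^[n] V := by
  induction n with
  | zero => simpa using hV
  | succ n ih =>
    calc μ ^ (n + 1) • W = μ ^ n • μ • W := by rw [smul_smul, pow_succ]
      _ ≤ μ ^ n • transfer W := smul_le_smul_of_nonneg_left hW (pow_nonneg hμ n)
      _ = transfer (μ ^ n • W) := (transfer_smul _ _).symm
      _ ≤ transfer (transfer^[n] V) := monotone_transfer ih
      _ = transfer^[n + 1] V := (Function.iterate_succ_apply' _ _ _).symm

lemma iterate_transfer_le_of_count_le {V : State → ℝ} {C : ℝ} {m : ℕ} (hC : 0 ≤ C)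
    (hle : ∀ σ, σ.count ≤ m → V σ ≤ C) (hnonpos : ∀ σ, m < σ.count → V σ ≤ 0) (n : ℕ) (σ : State) :
    transfer^[n] V σ ≤ C * √2 ^ m * (1 + √2) ^ n * excursionWeight σ := by
  have hpos (σ : State) : 0 ≤ excursionWeight σ :=
    div_nonneg (zero_le_one.trans (one_le_headingWeight σ)) (by positivity)
  have hV : V ≤ (C * √2 ^ m) • excursionWeight := by
    intro σ
    rcases le_or_gt σ.count m with hσ | hσ
    · have hpow : √2 ^ σ.count ≤ √2 ^ m := pow_le_pow_right₀ Real.one_lt_sqrt_two.le hσ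
      calc V σ ≤ C * 1 := by simpa using hle σ hσ
        _ ≤ C * (√2 ^ m * (1 / √2 ^ σ.count)) := by
          gcongr
          rwa [mul_one_div, one_le_div (by positivity)]
        _ ≤ C * (√2 ^ m * excursionWeight σ) := by
          unfold excursionWeight
          gcongr
          exact one_le_headingWeight σ
        _ = (C * √2 ^ m) * excursionWeight σ := by ring
    · exact (hnonpos σ hσ).trans (mul_nonneg (by positivity) (hpos σ))
  have heigen : transfer ((C * √2 ^ m) • excursionWeight) =
      (1 + √2) • (C * √2 ^ m) • excursionWeight := by
    rw [transfer_smul, transfer_excursionWeight, smul_comm]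
  refine (iterate_transfer_le (by positivity) heigen.le hV n σ).trans_eq ?_
  simp only [Pi.smul_apply, smul_eq_mul]
  ring

lemma cornerWeight_mul_le_iterate_transfer_one (hx : IsCriticalFugacity x) (n : ℕ) (σ : State) :
    x⁻¹ ^ n * cornerWeight x σ ≤ transfer^[n] 1 σ := by
  have hx₀ := hx.pos
  refine le_iterate_transfer (by positivity) ?_
    (cornerWeight_le_one hx₀.le hx.two_mul_lt_one.le) n σ
  exact (inv_smul_le_iff_of_pos hx₀).2 (cornerWeight_le_smul_transfer hx)

lemma iterate_transfer_one_le_smul (hx : IsCriticalFugacity x) (n : ℕ) :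
    transfer^[n] 1 ≤ x⁻¹ ^ n • ((n : ℝ) • cornerPotential x + headingWeight) := by
  have hx₀ := hx.pos
  have hcorner : transfer (cornerPotential x) ≤ x⁻¹ • cornerPotential x :=
    (le_inv_smul_iff_of_pos hx₀).2 (smul_transfer_cornerPotential_le hx)
  have hheading : transfer headingWeight ≤ x⁻¹ • (headingWeight + cornerPotential x) :=
    (le_inv_smul_iff_of_pos hx₀).2 (smul_transfer_headingWeight_le hx₀.le
      hx.mul_one_add_sqrt_two_lt_one.le hx.two_mul_lt_one.le)
  induction n with
  | zero => simpa [Pi.le_def] using one_le_headingWeight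
  | succ n ih =>
    calc transfer^[n + 1] 1 = transfer (transfer^[n] 1) := Function.iterate_succ_apply' _ _ _
      _ ≤ transfer (x⁻¹ ^ n • ((n : ℝ) • cornerPotential x + headingWeight)) :=
        monotone_transfer ih
      _ = x⁻¹ ^ n • ((n : ℝ) • transfer (cornerPotential x) + transfer headingWeight) := by
        rw [transfer_smul, transfer_add, transfer_smul]
      _ ≤ x⁻¹ ^ n • ((n : ℝ) • x⁻¹ • cornerPotential x +
          x⁻¹ • (headingWeight + cornerPotential x)) := by gcongr
      _ = x⁻¹ ^ (n + 1) • (((n + 1 : ℕ) : ℝ) • cornerPotential x + headingWeight) := by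
        push_cast
        module

lemma iterate_transfer_one_le (hx : IsCriticalFugacity x) (n : ℕ) (σ : State) :
    transfer^[n] 1 σ ≤ x⁻¹ ^ n * (n * (Real.exp (2 / (1 - 2 * x)) * 2) + √2) := by
  have hx₀ := hx.pos
  refine (iterate_transfer_one_le_smul hx n σ).trans ?_
  simp only [Pi.smul_apply, Pi.add_apply, smul_eq_mul]
  gcongr
  exacts [cornerPotential_le hx₀.le hx.two_mul_lt_one.le σ, headingWeight_le σ]

end iterate

end State

section History

variable {L : ℕ}

/-- The sites visited by `π` up to time `t`, from the latest to the first. As in `heightAt` and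
`widthAt`, times are clamped to `L`. -/
def history (π : Fin (L + 1) → ℤ × ℤ) : ℕ → List (ℤ × ℤ)
  | 0 => [π 0]
  | t + 1 => π (Fin.clamp (t + 1) L) :: history π t

lemma history_ne_nil (π : Fin (L + 1) → ℤ × ℤ) (t : ℕ) : history π t ≠ [] := by
  cases t <;> simp [history]

lemma clamp_val (i : Fin (L + 1)) : Fin.clamp i L = i := Fin.ext (min_eq_left (by omega))

lemma clamp_last : Fin.clamp L L = Fin.last L := clamp_val (Fin.last L)

lemma headI_history (π : Fin (L + 1) → ℤ × ℤ) (t : ℕ) :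
    (history π t).headI = π (Fin.clamp t L) := by
  cases t with
  | zero => exact congrArg π (clamp_val 0).symm
  | succ t => rfl

lemma drop_history (π : Fin (L + 1) → ℤ × ℤ) (t n : ℕ) :
    (history π (t + n)).drop n = history π t := by
  induction n with
  | zero => rfl
  | succ n ih => rw [← add_assoc, history, List.drop_succ_cons, ih]

lemma Iic_clamp_succ (t : ℕ) :
    Finset.Iic (Fin.clamp (t + 1) L) =
      insert (Fin.clamp (t + 1) L) (Finset.Iic (Fin.clamp t L)) := by
  ext i
  simp only [Finset.mem_Iic, Finset.mem_insert, Fin.le_def, Fin.ext_iff, Fin.coe_clamp]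
  omega

lemma toFinset_history (π : Fin (L + 1) → ℤ × ℤ) (t : ℕ) :
    (history π t).toFinset = (Finset.Iic (Fin.clamp t L)).image π := by
  induction t with
  | zero =>
    have hclamp : Fin.clamp 0 L = ⊥ := clamp_val 0
    rw [hclamp, Finset.Iic_bot, Finset.image_singleton]
    rfl
  | succ t ih => rw [history, List.toFinset_cons, ih, Iic_clamp_succ, Finset.image_insert]

lemma mem_history {π : Fin (L + 1) → ℤ × ℤ} {t : ℕ} {w : ℤ × ℤ} :
    w ∈ history π t ↔ ∃ i ≤ Fin.clamp t L, π i = w := by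
  rw [← List.mem_toFinset, toFinset_history, Finset.mem_image]
  simp only [Finset.mem_Iic]

lemma history_init (π : Fin (L + 1 + 1) → ℤ × ℤ) {t : ℕ} (ht : t ≤ L) :
    history (Fin.init π) t = history π t := by
  induction t with
  | zero => rfl
  | succ t ih =>
    have hclamp : (Fin.clamp (t + 1) L).castSucc = Fin.clamp (t + 1) (L + 1) := by
      simp only [Fin.ext_iff, Fin.val_castSucc, Fin.coe_clamp]
      omega
    rw [history, history, ih (by omega), Fin.init, hclamp]

lemma history_snoc_self (π : Fin (L + 1) → ℤ × ℤ) (w : ℤ × ℤ) :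
    history (Fin.snoc π w : Fin (L + 1 + 1) → ℤ × ℤ) (L + 1) = w :: history π L := by
  rw [history, ← history_init _ le_rfl, Fin.init_snoc, clamp_last, Fin.snoc_last]

lemma mem_prudentSet_iff {π : Fin (L + 1) → ℤ × ℤ} :
    π ∈ prudentSet L ↔ π 0 = 0 ∧
      ∀ i : Fin L, π i.succ - π i.castSucc ∈ prudentSteps (history π i) := by
  refine and_congr_right' (forall_congr' fun i => ?_)
  have hclamp : Fin.clamp (i : ℕ) L = i.castSucc := clamp_val i.castSucc
  simp only [mem_prudentSteps, IsPrudentStep, headI_history, mem_history, hclamp, not_exists,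
    not_and, ne_eq, eq_comm]

lemma mem_prudentSet_succ {π : Fin (L + 1 + 1) → ℤ × ℤ} :
    π ∈ prudentSet (L + 1) ↔ Fin.init π ∈ prudentSet L ∧
      π (Fin.last (L + 1)) - Fin.init π (Fin.last L) ∈ prudentSteps (history (Fin.init π) L) := by
  have hinit (i : Fin L) : history (Fin.init π) i = history π i := history_init π i.is_lt.le
  rw [mem_prudentSet_iff, mem_prudentSet_iff, Fin.forall_fin_succ', history_init π le_rfl,
    and_assoc]
  simp only [hinit]
  rfl

/-- The set of prudent paths as a `Finset`, built by appending prudent steps. -/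
noncomputable def prudentFinset : (L : ℕ) → Finset (Fin (L + 1) → ℤ × ℤ)
  | 0 => {0}
  | L + 1 => ((prudentFinset L).sigma fun π => prudentSteps (history π L)).image
      fun a => Fin.snoc a.1 (a.1 (Fin.last L) + a.2)

lemma coe_prudentFinset (L : ℕ) : (prudentFinset L : Set (Fin (L + 1) → ℤ × ℤ)) = prudentSet L := by
  induction L with
  | zero =>
    ext π
    simp [prudentFinset, prudentSet, funext_iff, Fin.forall_fin_one]
    rfl
  | succ L ih =>
    ext π
    rw [mem_prudentSet_succ, ← ih]
    simp only [prudentFinset, Finset.coe_image, Set.mem_image, Finset.mem_coe, Finset.mem_sigma]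
    constructor
    · rintro ⟨⟨π, s⟩, ⟨hπ, hs⟩, rfl⟩
      simpa using ⟨hπ, hs⟩
    · rintro ⟨hπ, hs⟩
      exact ⟨⟨Fin.init π, _⟩, ⟨hπ, hs⟩, by simp⟩

lemma sum_prudentFinset (L : ℕ) (φ : List (ℤ × ℤ) → ℝ) :
    ∑ π ∈ prudentFinset L, φ (history π L) = continuationSum φ L [0] := by
  induction L generalizing φ with
  | zero => simp [prudentFinset, history, continuationSum]
  | succ L ih =>
    rw [prudentFinset, Finset.sum_image, Finset.sum_sigma, continuationSum_add φ L 1, ← ih]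
    · simp only [history_snoc_self, continuationSum, headI_history, clamp_last]
    · rintro ⟨π, s⟩ - ⟨π', s'⟩ - h
      obtain ⟨rfl, h⟩ := Fin.snoc_inj.1 h
      obtain rfl : s = s' := add_left_cancel h
      rfl

lemma card_prudentSet (L : ℕ) : (Nat.card (prudentSet L) : ℝ) = continuationSum 1 L [0] := by
  simp [← coe_prudentFinset, ← sum_prudentFinset]

lemma card_inter_prudentSet_le {A : Set (Fin (L + 1) → ℤ × ℤ)} {φ : List (ℤ × ℤ) → ℝ}
    (hφ : 0 ≤ φ) (hA : ∀ π ∈ A ∩ prudentSet L, 1 ≤ φ (history π L)) :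
    (Nat.card ↥(A ∩ prudentSet L) : ℝ) ≤ continuationSum φ L [0] := by
  classical
  have hcoe : A ∩ prudentSet L = ((prudentFinset L).filter (· ∈ A) : Finset _) := by
    ext π
    simp [← coe_prudentFinset, and_comm]
  calc (Nat.card ↥(A ∩ prudentSet L) : ℝ)
      = ∑ π ∈ prudentFinset L with π ∈ A, 1 := by simp [hcoe]
    _ ≤ ∑ π ∈ prudentFinset L with π ∈ A, φ (history π L) :=
      Finset.sum_le_sum fun π hπ => hA π (by rw [hcoe]; exact hπ)
    _ ≤ ∑ π ∈ prudentFinset L, φ (history π L) :=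
      Finset.sum_le_sum_of_subset_of_nonneg (Finset.filter_subset _ _) fun π _ _ => hφ _
    _ = continuationSum φ L [0] := sum_prudentFinset L φ

end History

section ExcursionTimes

variable {L : ℕ} {π : Fin (L + 1) → ℤ × ℤ}

/-- The size of the range of `π` up to time `t` in the direction in which it has to grow for the
walk to complete its `i + 1`-st excursion: the height for even `i` and the width for odd `i`. -/
noncomputable def extent (π : Fin (L + 1) → ℤ × ℤ) (i t : ℕ) : ℕ :=
  ((history π t).toFinset.image (exitCoord i)).card

lemma excTime_succ (π : Fin (L + 1) → ℤ × ℤ) (i : ℕ) :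
    excTime L π (i + 1) = (excTime L π i).bind (nextTime L (extent π i)) := by
  have hextent : (if Even i then heightAt L π else widthAt L π) = extent π i := by
    funext t
    rw [extent, toFinset_history, Finset.image_image]
    split_ifs with hi <;> simp only [heightAt, widthAt, exitCoord, Function.comp_def, hi] <;> rfl
  rw [excTime, hextent]

lemma extent_lt_extent_succ_iff {i t : ℕ} :
    extent π i t < extent π i (t + 1) ↔
      ∀ w ∈ history π t, exitCoord i w ≠ exitCoord i (π (Fin.clamp (t + 1) L)) := by
  rw [extent, extent, history, List.toFinset_cons, Finset.image_insert, Finset.card_insert_eq_ite]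
  split_ifs with h <;> simpa using h

lemma excursionCount_history_succ (π : Fin (L + 1) → ℤ × ℤ) (t : ℕ) :
    excursionCount (history π (t + 1)) = excursionCount (history π t) +
      if extent π (excursionCount (history π t)) t < extent π (excursionCount (history π t)) (t + 1)
      then 1 else 0 := by
  simp only [history, excursionCount, extent_lt_extent_succ_iff, history_ne_nil, ne_eq,
    not_false_eq_true, true_and]

lemma extent_succ_le_of_extent_lt (hπ : π ∈ prudentSet L) {i t : ℕ} (ht : t < L)
    (h : extent π i t < extent π i (t + 1)) : extent π (i + 1) (t + 1) ≤ extent π (i + 1) t := by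
  have hstep : IsStep (π (Fin.clamp (t + 1) L) - π (Fin.clamp t L)) := by
    have hsucc : Fin.clamp (t + 1) L = Fin.succ ⟨t, ht⟩ := clamp_val (Fin.succ ⟨t, ht⟩)
    have hcastSucc : Fin.clamp t L = Fin.castSucc ⟨t, ht⟩ := clamp_val (Fin.castSucc ⟨t, ht⟩)
    rw [hsucc, hcastSucc]
    exact (hπ.2 ⟨t, ht⟩).1
  have hmem : π (Fin.clamp t L) ∈ history π t := mem_history.2 ⟨_, le_rfl, rfl⟩
  rw [← not_lt]
  intro h'
  exact extent_lt_extent_succ_iff.1 h' _ hmem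
    (exitCoord_succ_eq_of_ne hstep (extent_lt_extent_succ_iff.1 h _ hmem))

lemma nextTime_eq_some {f : ℕ → ℕ} {a t : ℕ} (hat : a ≤ t) (ht : t < L) (h : f t < f (t + 1))
    (hmin : ∀ s ∈ Ico a t, f (s + 1) ≤ f s) : nextTime L f a = some t := by
  classical
  have hex : ∃ t : ℕ, a < t ∧ t ≤ L ∧ f (t - 1) < f t := ⟨t + 1, by omega, ht, h⟩
  have hfind : Nat.find hex = t + 1 := by
    refine (Nat.find_eq_iff hex).2 ⟨⟨by omega, ht, h⟩, ?_⟩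
    rintro (_ | s) hs ⟨has, -, hf⟩
    · omega
    · exact (hmin s ⟨by omega, by omega⟩).not_gt hf
  rw [nextTime, dif_pos hex, hfind, Nat.add_sub_cancel]

lemma le_and_le_of_nextTime_eq_some {f : ℕ → ℕ} {a b : ℕ} (h : nextTime L f a = some b) :
    a ≤ b ∧ b ≤ L := by
  classical
  rw [nextTime] at h
  split_ifs at h with hex
  have hspec := Nat.find_spec hex
  obtain rfl := Option.some.inj h
  omega

lemma exists_excTime_excursionCount (hπ : π ∈ prudentSet L) {t : ℕ} (ht : t ≤ L) :
    ∃ a ≤ t, excTime L π (excursionCount (history π t)) = some a ∧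
      (0 < excursionCount (history π t) → a < t) ∧
      ∀ s ∈ Ico a t, extent π (excursionCount (history π t)) (s + 1) ≤
        extent π (excursionCount (history π t)) s := by
  induction t with
  | zero =>
    have hcount : excursionCount (history π 0) = 0 := by simp [history, excursionCount]
    rw [hcount]
    exact ⟨0, le_rfl, rfl, by simp, by simp⟩
  | succ t ih =>
    obtain ⟨a, hat, ha, hpos, hmin⟩ := ih (by omega)
    rw [excursionCount_history_succ]
    set k := excursionCount (history π t)
    split_ifs with hk
    · refine ⟨t, t.le_succ, ?_, fun _ => t.lt_succ_self, fun s hs => ?_⟩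
      · rw [excTime_succ, ha, Option.bind_some, nextTime_eq_some hat ht hk hmin]
      · obtain rfl : s = t := by have := hs.1; have := hs.2; omega
        exact extent_succ_le_of_extent_lt hπ ht hk
    · refine ⟨a, by omega, ha, fun h => (hpos h).trans t.lt_succ_self, fun s hs => ?_⟩
      rcases (Nat.lt_succ_iff.1 hs.2).lt_or_eq with hst | rfl
      · exact hmin s ⟨hs.1, hst⟩
      · exact not_lt.1 hk

lemma excTime_le {i a : ℕ} (h : excTime L π i = some a) : a ≤ L := by
  cases i with
  | zero => simp only [excTime, Option.some.injEq] at h; omega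
  | succ i =>
    rw [excTime_succ, Option.bind_eq_some_iff] at h
    obtain ⟨b, -, h⟩ := h
    exact (le_and_le_of_nextTime_eq_some h).2

lemma excEnd_le (π : Fin (L + 1) → ℤ × ℤ) (i : ℕ) : excEnd L π i ≤ L := by
  rw [excEnd]
  cases h : excTime L π i with
  | none => rfl
  | some a => exact excTime_le h

lemma monotone_excEnd (π : Fin (L + 1) → ℤ × ℤ) : Monotone (excEnd L π) := by
  refine monotone_nat_of_le_succ fun i => ?_
  cases h : excTime L π (i + 1) with
  | none => exact (excEnd_le π i).trans_eq (by rw [excEnd, h, Option.getD_none])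
  | some b =>
    obtain ⟨a, ha, hb⟩ := Option.bind_eq_some_iff.1 (excTime_succ π i ▸ h)
    simpa only [excEnd, ha, h, Option.getD_some] using (le_and_le_of_nextTime_eq_some hb).1

lemma sum_excLen (π : Fin (L + 1) → ℤ × ℤ) (m : ℕ) :
    ∑ i ∈ Finset.Icc 1 m, excLen L π i = excEnd L π m := by
  have hIcc : Finset.Icc 1 m = Finset.Ico (0 + 1) (m + 1) := rfl
  rw [hIcc, ← Finset.sum_Ico_add']
  simp only [excLen, Nat.add_sub_cancel, ← Finset.range_eq_Ico,
    Finset.sum_range_tsub (monotone_excEnd π)]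
  exact Nat.sub_zero _

lemma excursionCount_history_le (hπ : π ∈ prudentSet L) {t m : ℕ} (ht : t ≤ L)
    (h : t ≤ excEnd L π m) : excursionCount (history π t) ≤ m := by
  obtain ⟨a, -, ha, hpos, -⟩ := exists_excTime_excursionCount hπ ht
  by_contra! hlt
  have hle : t ≤ excEnd L π (excursionCount (history π t)) :=
    h.trans (monotone_excEnd π hlt.le)
  rw [excEnd, ha] at hle
  exact (hpos (by omega)).not_ge hle

end ExcursionTimes

section UniformMeasure

variable {x : ℝ} {L : ℕ} {A B : Set (Fin (L + 1) → ℤ × ℤ)}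

lemma probUnif_nonneg (A : Set (Fin (L + 1) → ℤ × ℤ)) : 0 ≤ probUnif L A :=
  div_nonneg (Nat.cast_nonneg _) (Nat.cast_nonneg _)

lemma probUnif_mono (h : A ⊆ B) : probUnif L A ≤ probUnif L B := by
  have hfinite : (prudentSet L).Finite := coe_prudentFinset L ▸ (prudentFinset L).finite_toSet
  have hcard : Nat.card ↥(A ∩ prudentSet L) ≤ Nat.card ↥(B ∩ prudentSet L) :=
    Nat.card_mono (hfinite.inter_of_right B) (inter_subset_inter_left _ h)
  unfold probUnif
  gcongr

lemma le_card_prudentSet_succ (hx : IsCriticalFugacity x) (L : ℕ) :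
    4 * x⁻¹ ^ L ≤ (Nat.card (prudentSet (L + 1)) : ℝ) := by
  rw [card_prudentSet, continuationSum_succ_singleton_zero]
  calc 4 * x⁻¹ ^ L = ∑ _s ∈ directions, x⁻¹ ^ L := by simp [card_directions]
    _ ≤ ∑ s ∈ directions, continuationSum 1 L [s, 0] := Finset.sum_le_sum fun s hs => ?_
  obtain ⟨k, hs⟩ := exists_hasState_pair (mem_directions.1 hs)
  rw [hs.continuationSum_eq (V := 1) (fun _ _ _ _ => rfl)]
  simpa [State.cornerWeight] using
    State.cornerWeight_mul_le_iterate_transfer_one hx L ⟨.fresh, 0, 0, 1, k⟩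

lemma continuationSum_excursionCount_le (hx : IsCriticalFugacity x) (m i n : ℕ) :
    continuationSum (fun h => if excursionCount (h.drop n) ≤ m then 1 else 0) (i + 1 + n) [0] ≤
      4 * (x⁻¹ ^ n * (n * (Real.exp (2 / (1 - 2 * x)) * 2) + √2) * √2 ^ m * (1 + √2) ^ i * √2) := by
  have hx₀ := hx.pos
  set C := x⁻¹ ^ n * (n * (Real.exp (2 / (1 - 2 * x)) * 2) + √2)
  have hC : 0 ≤ C := by positivity
  let V (σ : State) : ℝ := (if σ.count ≤ m then 1 else 0) * State.transfer^[n] 1 σ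
  have hV (z l σ) (h : HasState z l σ) : continuationSum
      (fun h => if excursionCount (h.drop n) ≤ m then 1 else 0) n (z :: l) = V σ := by
    obtain ⟨u, v, h'⟩ := id h
    rw [continuationSum_comp_drop (fun h => if excursionCount h ≤ m then 1 else 0), h'.count_eq,
      h.continuationSum_eq (V := 1) fun _ _ _ _ => rfl]
  rw [add_right_comm, continuationSum_succ_singleton_zero]
  calc ∑ s ∈ directions, continuationSum _ (i + n) [s, 0]
      ≤ ∑ _s ∈ directions, C * √2 ^ m * (1 + √2) ^ i * √2 := Finset.sum_le_sum fun s hs => ?_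
    _ = 4 * (C * √2 ^ m * (1 + √2) ^ i * √2) := by simp [card_directions]
  obtain ⟨k, hs⟩ := exists_hasState_pair (mem_directions.1 hs)
  rw [continuationSum_add, hs.continuationSum_eq hV]
  refine (State.iterate_transfer_le_of_count_le (m := m) hC ?_ ?_ i _).trans ?_
  · intro σ hσ
    simpa only [V, if_pos hσ, one_mul] using State.iterate_transfer_one_le hx n σ
  · intro σ hσ
    simp [V, hσ.not_ge]
  · gcongr
    exact (div_le_self (zero_le_one.trans (State.one_le_headingWeight _))
      (one_le_pow₀ Real.one_lt_sqrt_two.le)).trans (State.headingWeight_le _)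

lemma probUnif_lt_excEnd_le (hx : IsCriticalFugacity x) (m i n : ℕ) :
    probUnif (i + n + 1) {π | i < excEnd (i + n + 1) π m} ≤
      √2 * (n * (Real.exp (2 / (1 - 2 * x)) * 2) + √2) * √2 ^ m * (x * (1 + √2)) ^ i := by
  have hx₀ := hx.pos
  have hcard := le_card_prudentSet_succ hx (i + n)
  have hinter : (Nat.card ↥({π | i < excEnd (i + n + 1) π m} ∩ prudentSet (i + n + 1)) : ℝ) ≤
      continuationSum (fun h => if excursionCount (h.drop n) ≤ m then 1 else 0) (i + n + 1) [0] :=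
    card_inter_prudentSet_le (fun h => by dsimp only; split_ifs <;> simp) fun π ⟨hi, hπ⟩ => by
      have hdrop := drop_history π (i + 1) n
      rw [add_right_comm i 1 n] at hdrop
      rw [hdrop, if_pos (excursionCount_history_le hπ (by omega) hi)]
  rw [probUnif, div_le_iff₀ (lt_of_lt_of_le (by positivity) hcard)]
  calc _ ≤ _ := hinter
    _ ≤ _ := add_right_comm i 1 n ▸ continuationSum_excursionCount_le hx m i n
    _ = √2 * (n * (Real.exp (2 / (1 - 2 * x)) * 2) + √2) * √2 ^ m * (x * (1 + √2)) ^ i *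
        (4 * x⁻¹ ^ (i + n)) := by
      rw [mul_pow, pow_add, inv_pow x i]
      field_simp
    _ ≤ _ := by gcongr

lemma exists_probUnif_le_excEnd_le : ∃ K ≥ (0 : ℝ), ∃ r ∈ Ioo (0 : ℝ) 1, ∀ L m t : ℕ, t ≠ 0 →
    probUnif L {π | t ≤ excEnd L π m} ≤ K * L * √2 ^ m * r ^ t := by
  obtain ⟨x, hx⟩ := exists_isCriticalFugacity
  have hx₀ := hx.pos
  set r := x * (1 + √2)
  set E := Real.exp (2 / (1 - 2 * x)) * 2
  have hr : 0 < r := by positivity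
  have hE : 0 < E := by positivity
  refine ⟨√2 * (E + √2) * r⁻¹, by positivity, r, ⟨hr, hx.mul_one_add_sqrt_two_lt_one⟩,
    fun L m t ht => ?_⟩
  rcases lt_or_ge L t with hLt | htL
  · have hempty : {π | t ≤ excEnd L π m} = ∅ :=
      eq_empty_of_forall_notMem fun π hπ => (hLt.trans_le hπ).not_ge (excEnd_le π m)
    rw [hempty, probUnif, empty_inter, Nat.card_of_isEmpty, Nat.cast_zero, zero_div]
    positivity
  · obtain ⟨i, rfl⟩ := Nat.exists_eq_succ_of_ne_zero ht
    obtain ⟨n, rfl⟩ := Nat.exists_eq_add_of_lt htL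
    have hlinear : n * E + √2 ≤ (E + √2) * (i + n + 1 : ℕ) := by
      have : (n : ℝ) ≤ (i + n + 1 : ℕ) := by norm_cast; omega
      have : (1 : ℝ) ≤ (i + n + 1 : ℕ) := by norm_cast; omega
      nlinarith [Real.sqrt_nonneg 2]
    calc probUnif (i + n + 1) {π | i < excEnd (i + n + 1) π m}
        ≤ √2 * (n * E + √2) * √2 ^ m * r ^ i := probUnif_lt_excEnd_le hx m i n
      _ ≤ √2 * ((E + √2) * (i + n + 1 : ℕ)) * √2 ^ m * r ^ i := by gcongr
      _ = √2 * (E + √2) * r⁻¹ * (i + n + 1 : ℕ) * √2 ^ m * r ^ (i + 1) := by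
        rw [pow_succ]
        field_simp

end UniformMeasure

lemma sqrt_two_pow_floor_mul_log_le {δ y : ℝ} (hδ : 0 ≤ δ) (hy : 1 ≤ y) :
    √2 ^ ⌊δ * Real.log y⌋₊ ≤ y ^ δ := by
  have hlog : 0 ≤ Real.log y := Real.log_nonneg hy
  have hsqrt : √2 ≤ Real.exp 1 := by
    rw [Real.sqrt_le_left (Real.exp_pos 1).le]
    nlinarith [Real.add_one_le_exp 1]
  calc √2 ^ ⌊δ * Real.log y⌋₊ ≤ Real.exp 1 ^ ⌊δ * Real.log y⌋₊ := by gcongr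
    _ = Real.exp ⌊δ * Real.log y⌋₊ := (Real.exp_one_pow _)
    _ ≤ Real.exp (δ * Real.log y) := Real.exp_le_exp.2 (Nat.floor_le (by positivity))
    _ = y ^ δ := by rw [Real.rpow_def_of_pos (by linarith), mul_comm]

lemma pow_ceil_div_neg_log_mul_log_le {r y : ℝ} (hr : r ∈ Ioo (0 : ℝ) 1) (hy : 0 < y) (a : ℝ) :
    r ^ ⌈a / -Real.log r * Real.log y⌉₊ ≤ y ^ (-a) := by
  have hlog : Real.log r < 0 := Real.log_neg hr.1 hr.2
  calc r ^ ⌈a / -Real.log r * Real.log y⌉₊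
      = Real.exp (Real.log r * ⌈a / -Real.log r * Real.log y⌉₊) := by
        rw [← Real.rpow_natCast, Real.rpow_def_of_pos hr.1]
    _ ≤ Real.exp (Real.log r * (a / -Real.log r * Real.log y)) :=
      Real.exp_le_exp.2 (mul_le_mul_of_nonpos_left (Nat.le_ceil _) hlog.le)
    _ = y ^ (-a) := by
      rw [Real.rpow_def_of_pos hy]
      field_simp [hlog.ne]

end PrudentWalk

open PrudentWalk

theorem first_excursions_total_length_general (δ : ℝ) (hδ : 0 < δ) :
    ∃ κ : ℝ, 0 < κ ∧
      Tendsto (fun L : ℕ =>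
          probUnif L {π |
            κ * Real.log L ≤ ((∑ i ∈ Finset.Icc 1 ⌊δ * Real.log L⌋₊, excLen L π i : ℕ) : ℝ)})
        atTop (nhds 0) := by
  obtain ⟨K, hK, r, hr, hbound⟩ := exists_probUnif_le_excEnd_le
  have hr₀ := hr.1
  have hlogr : 0 < -Real.log r := neg_pos.2 (Real.log_neg hr.1 hr.2)
  refine ⟨(δ + 2) / -Real.log r, by positivity, ?_⟩
  have hlim : Tendsto (fun L : ℕ => K * (L : ℝ)⁻¹) atTop (nhds (K * 0)) :=
    (tendsto_inv_atTop_zero.comp tendsto_natCast_atTop_atTop).const_mul K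
  rw [mul_zero] at hlim
  refine squeeze_zero' (Eventually.of_forall fun L => probUnif_nonneg _) ?_ hlim
  filter_upwards [eventually_gt_atTop 1] with L hL
  have hL₁ : (1 : ℝ) < L := by exact_mod_cast hL
  simp only [sum_excLen, ← Nat.ceil_le]
  calc _ ≤ _ := hbound L _ _ (Nat.ceil_pos.2 (by have := Real.log_pos hL₁; positivity)).ne'
    _ ≤ K * L * (L : ℝ) ^ δ * (L : ℝ) ^ (-(δ + 2)) := by
      gcongr
      exacts [sqrt_two_pow_floor_mul_log_le hδ.le hL₁.le,
        pow_ceil_div_neg_log_mul_log_le hr (by linarith) _]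
    _ = K * (L : ℝ)⁻¹ := by
      have hL₀ : (0 : ℝ) < L := by linarith
      rw [mul_assoc, ← Real.rpow_add hL₀, mul_assoc, ← Real.rpow_one_add' hL₀.le (by norm_num)]
      ring_nf
      rw [Real.rpow_neg_one]

/-- **The first `δ log L` excursions are short:** for every `δ > 0` there is `κ > 0` such
that with `P_{unif,L}`-probability tending to `1`, the total length of the first
`min(γ_L, ⌊δ log L⌋)` excursions is less than `κ (log L)²`. -/
theorem first_excursions_total_length :
    ∀ δ : ℝ, 0 < δ → ∃ κ : ℝ, 0 < κ ∧
      Tendsto (fun L : ℕ =>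
          probUnif L {π |
            κ * Real.log L ^ 2 ≤
              ((∑ i ∈ Finset.Icc 1 (min (numExc L π) ⌊δ * Real.log L⌋₊),
                excLen L π i : ℕ) : ℝ)})
        atTop (nhds 0) := by
  intro δ hδ
  obtain ⟨κ, hκ, hlim⟩ := first_excursions_total_length_general δ hδ
  refine ⟨κ, hκ, squeeze_zero' (Eventually.of_forall fun L => probUnif_nonneg _) ?_ hlim⟩
  filter_upwards [(Real.tendsto_log_atTop.comp tendsto_natCast_atTop_atTop).eventually_ge_atTop 1]
    with L (hL : 1 ≤ Real.log L)
  refine probUnif_mono fun π (hπ : κ * Real.log L ^ 2 ≤ _) => ?_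
  have hsum : (∑ i ∈ Finset.Icc 1 (min (numExc L π) ⌊δ * Real.log L⌋₊), excLen L π i) ≤
      ∑ i ∈ Finset.Icc 1 ⌊δ * Real.log L⌋₊, excLen L π i := by
    gcongr
    exact min_le_right _ _
  calc κ * Real.log L ≤ κ * Real.log L ^ 2 := by gcongr; exact le_self_pow₀ hL two_ne_zero
    _ ≤ _ := hπ.trans (Nat.cast_le.2 hsum)
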